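/- arXiv:2101.05880 — 2 statements merged into one kernel-verified Lean document; each statement's English description precedes it below -/
import Mathlib

section
/- For every k ∈ {1, …, N−1}, the identity M_{k+1}·(L̄_{k+1} − L̂_{k+1}) = M_k·(L̄_k − L̂_{k+1}) holds. Consequently, if 1 + M_k·(L̄_k − L̂_k)/λ ≤ 0 for some k, then 1 + M_{k'}·(L̄_{k'} − L̂_{k'})/λ ≤ 0 for all k' ≥ k; that is, the set { k : 1 + M_k·(L̄_k − L̂_k)/λ > 0 } is an interval {1, …, p} starting at 1. -/
/-!
For every `c`, `M_k (L̄_k - c) = Σ_{i ≤ k} m_i (L̂_i - c)`. With `k + 1` for `k` and `c = L̂_{k+1}`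
the last term of the sum vanishes, which is the identity. When `k` grows, the sum
`A_k = M_k (L̄_k - L̂_k)` acquires nonpositive terms and its old terms decrease, as the subtracted
loss increases; hence `A_k` is antitone and `1 + A_k / λ > 0` is a downward closed condition. It
holds at `k = 1` because `A_1 = 0`.
-/

open Finset

noncomputable section

/-- `Mpart m k = Σ_{i=1}^k m_i`: total number of samples of the first `k` clients
(clients are 0-indexed, so these are clients `0, …, k-1`). -/
def Mpart (m : ℕ → ℝ) (k : ℕ) : ℝ := ∑ i ∈ Finset.range k, m i

/-- `Lbar m L k = (Σ_{i=1}^k m_i·L̂_i) / M_k`: the `k`-average loss. -/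
def Lbar (m L : ℕ → ℝ) (k : ℕ) : ℝ :=
  (∑ i ∈ Finset.range k, m i * L i) / Mpart m k

/-- The set `{ k ∈ {1, …, N} : 1 + M_k·(L̄_k − L̂_k)/λ > 0 }`
(with `L̂_k = L (k-1)` since losses are 0-indexed). -/
def goodSet (m L : ℕ → ℝ) (lam : ℝ) (N : ℕ) : Set ℕ :=
  {k | k ∈ Finset.Icc 1 N ∧ 0 < 1 + Mpart m k * (Lbar m L k - L (k - 1)) / lam}

/-- `p = max{ k ∈ {1,…,N} : 1 + M_k·(L̄_k − L̂_k)/λ > 0 }`. -/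
def pIdx (m L : ℕ → ℝ) (lam : ℝ) (N : ℕ) : ℕ := sSup (goodSet m L lam N)

/-- The optimal weights `α*_i = (m_i/M_p)·[1 + M_p·(L̄_p − L̂_i)/λ]₊` (client `i` 0-indexed). -/
def alphaStar (m L : ℕ → ℝ) (lam : ℝ) (N : ℕ) (i : ℕ) : ℝ :=
  (m i / Mpart m (pIdx m L lam N)) *
    max 0 (1 + Mpart m (pIdx m L lam N) * (Lbar m L (pIdx m L lam N) - L i) / lam)

/-- The objective `F(α) = Σ_i α_i·L̂_i + (λ/2)·Σ_i α_i²/m_i`. -/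
def objF (N : ℕ) (m L : ℕ → ℝ) (lam : ℝ) (α : ℕ → ℝ) : ℝ :=
  ∑ i ∈ Finset.range N, α i * L i + lam / 2 * ∑ i ∈ Finset.range N, (α i) ^ 2 / m i

lemma sum_mul_sub_le_sum_mul_sub {ι R : Type*} [Ring R] [PartialOrder R] [IsOrderedRing R]
    {s t : Finset ι} {w x : ι → R} {a b : R} (hst : s ⊆ t) (hw : ∀ i ∈ t, 0 ≤ w i)
    (hx : ∀ i ∈ t, i ∉ s → x i ≤ b) (hab : a ≤ b) :
    ∑ i ∈ t, w i * (x i - b) ≤ ∑ i ∈ s, w i * (x i - a) :=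
  calc
    ∑ i ∈ t, w i * (x i - b) ≤ ∑ i ∈ s, w i * (x i - b) :=
      sum_le_sum_of_subset_of_nonpos' hst fun i hit his =>
        mul_nonpos_of_nonneg_of_nonpos (hw i hit) (sub_nonpos.2 (hx i hit his))
    _ ≤ ∑ i ∈ s, w i * (x i - a) :=
      sum_le_sum fun i his => mul_le_mul_of_nonneg_left (sub_le_sub_left hab _) (hw i (hst his))

lemma sep_Icc_lt_eq_Icc_of_isGreatest {α β : Type*} [Preorder α] [Preorder β] {f : α → β}
    {a b p : α} {c : β} (hf : AntitoneOn f (Set.Icc a b))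
    (hp : IsGreatest {x ∈ Set.Icc a b | c < f x} p) :
    {x ∈ Set.Icc a b | c < f x} = Set.Icc a p := by
  obtain ⟨⟨hp_mem, hcp⟩, hp_ub⟩ := hp
  refine Set.Subset.antisymm (fun x hx => ⟨hx.1.1, hp_ub hx⟩) fun x hx => ?_
  have hx_mem : x ∈ Set.Icc a b := ⟨hx.1, hx.2.trans hp_mem.2⟩
  exact ⟨hx_mem, hcp.trans_le (hf hx_mem hp_mem hx.2)⟩

section AverageLoss

variable {m L : ℕ → ℝ} {k N : ℕ}

lemma Mpart_pos (hk : 1 ≤ k) (hm : ∀ i < k, 0 < m i) : 0 < Mpart m k :=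
  sum_pos (fun i hi => hm i (mem_range.1 hi)) (nonempty_range_iff.2 (by omega))

lemma Mpart_mul_Lbar_sub (L : ℕ → ℝ) (hM : Mpart m k ≠ 0) (c : ℝ) :
    Mpart m k * (Lbar m L k - c) = ∑ i ∈ range k, m i * (L i - c) := by
  rw [mul_sub, Lbar, mul_div_cancel₀ _ hM, Mpart, sum_mul, ← sum_sub_distrib]
  simp only [mul_sub]

lemma Mpart_succ_mul_Lbar_succ_sub (L : ℕ → ℝ) (hM : Mpart m k ≠ 0)
    (hM_succ : Mpart m (k + 1) ≠ 0) :
    Mpart m (k + 1) * (Lbar m L (k + 1) - L k) = Mpart m k * (Lbar m L k - L k) := by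
  rw [Mpart_mul_Lbar_sub L hM_succ, Mpart_mul_Lbar_sub L hM, sum_range_succ, sub_self, mul_zero,
    add_zero]

lemma Mpart_one_mul_Lbar_one_sub (L : ℕ → ℝ) (hM : Mpart m 1 ≠ 0) :
    Mpart m 1 * (Lbar m L 1 - L 0) = 0 := by
  rw [Mpart_mul_Lbar_sub L hM, sum_range_one, sub_self, mul_zero]

lemma antitoneOn_Mpart_mul_Lbar_sub (hm : ∀ i < N, 0 < m i) (hL : MonotoneOn L (Set.Iio N)) :
    AntitoneOn (fun k => Mpart m k * (Lbar m L k - L (k - 1))) (Set.Icc 1 N) := by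
  have eq_sum : ∀ k ∈ Set.Icc 1 N,
      Mpart m k * (Lbar m L k - L (k - 1)) = ∑ i ∈ range k, m i * (L i - L (k - 1)) :=
    fun k hk => Mpart_mul_Lbar_sub L (Mpart_pos hk.1 fun i hi => hm i (hi.trans_le hk.2)).ne' _
  rintro k ⟨hk, hkN⟩ l ⟨hl, hlN⟩ hkl
  have le_pred : ∀ i < l, L i ≤ L (l - 1) := fun i hi =>
    hL (hi.trans_le hlN) (by grind) (Nat.le_sub_one_of_lt hi)
  simp only [eq_sum k ⟨hk, hkN⟩, eq_sum l ⟨hl, hlN⟩]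
  exact sum_mul_sub_le_sum_mul_sub (range_mono hkl)
    (fun i hi => (hm i ((mem_range.1 hi).trans_le hlN)).le)
    (fun i hi _ => le_pred i (mem_range.1 hi)) (le_pred (k - 1) (by omega))

lemma one_mem_goodSet (L : ℕ → ℝ) (lam : ℝ) (hN : 1 ≤ N) (hM : Mpart m 1 ≠ 0) :
    1 ∈ goodSet m L lam N := by
  refine ⟨mem_Icc.2 ⟨le_rfl, hN⟩, ?_⟩
  rw [Nat.sub_self, Mpart_one_mul_Lbar_one_sub L hM, zero_div, add_zero]
  exact one_pos

lemma isGreatest_goodSet_pIdx {lam : ℝ} (h : (goodSet m L lam N).Nonempty) :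
    IsGreatest (goodSet m L lam N) (pIdx m L lam N) := by
  have bdd : BddAbove (goodSet m L lam N) := ⟨N, fun _ hk => (mem_Icc.1 hk.1).2⟩
  exact ⟨Nat.sSup_mem h bdd, fun _ hk => le_csSup bdd hk⟩

lemma goodSet_eq_sep (m L : ℕ → ℝ) (lam : ℝ) (N : ℕ) :
    goodSet m L lam N =
      {k ∈ Set.Icc 1 N | 0 < 1 + Mpart m k * (Lbar m L k - L (k - 1)) / lam} := by
  simp only [goodSet, mem_Icc, Set.mem_Icc]

end AverageLoss

/-- the identity `M_{k+1}(L̄_{k+1} − L̂_{k+1}) = M_k(L̄_k − L̂_{k+1})`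
(with `L̂_{k+1} = L k` in 0-indexed losses); consequently the defining condition of `p`
is downward closed, and the good set is exactly the interval `{1, …, p}`. -/
theorem goodSet_is_interval
    (N : ℕ) (hN : 1 ≤ N) (m L : ℕ → ℝ)
    (hm : ∀ i < N, 0 < m i)
    (hL : ∀ i j, i ≤ j → j < N → L i ≤ L j)
    (lam : ℝ) (hlam : 0 < lam) :
    (∀ k, 1 ≤ k → k + 1 ≤ N →
      Mpart m (k + 1) * (Lbar m L (k + 1) - L k) = Mpart m k * (Lbar m L k - L k)) ∧
    (∀ k k', 1 ≤ k → k ≤ k' → k' ≤ N →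
      1 + Mpart m k * (Lbar m L k - L (k - 1)) / lam ≤ 0 →
      1 + Mpart m k' * (Lbar m L k' - L (k' - 1)) / lam ≤ 0) ∧
    goodSet m L lam N = Set.Icc 1 (pIdx m L lam N) := by
  have M_ne_zero : ∀ k, 1 ≤ k → k ≤ N → Mpart m k ≠ 0 := fun k hk hkN =>
    (Mpart_pos hk fun i hi => hm i (hi.trans_le hkN)).ne'
  have anti : AntitoneOn (fun k => 1 + Mpart m k * (Lbar m L k - L (k - 1)) / lam)
      (Set.Icc 1 N) := fun k hk l hl hkl => by
    have A_le := antitoneOn_Mpart_mul_Lbar_sub hm (fun i _ j hj hij => hL i j hij hj) hk hl hkl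
    dsimp only at A_le ⊢
    gcongr
  refine ⟨fun k hk hkN => ?_, fun k l hk hkl hlN h => ?_, ?_⟩
  · exact Mpart_succ_mul_Lbar_succ_sub L (M_ne_zero k hk (by omega))
      (M_ne_zero (k + 1) (by omega) hkN)
  · exact (anti ⟨hk, hkl.trans hlN⟩ ⟨hk.trans hkl, hlN⟩ hkl).trans h
  · have hp : IsGreatest (goodSet m L lam N) (pIdx m L lam N) :=
      isGreatest_goodSet_pIdx ⟨1, one_mem_goodSet L lam hN (M_ne_zero 1 le_rfl hN)⟩
    rw [goodSet_eq_sep] at hp ⊢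
    exact sep_Icc_lt_eq_Icc_of_isGreatest anti hp
end
end

section
/- The vector α* with α*_i = (m_i/M_p)·[ 1 + M_p·(L̄_p − L̂_i)/λ ]_+ is a feasible point of the simplex: every entry is nonnegative, α*_i > 0 for i ≤ p, α*_i = 0 for i > p, and Σ_{i=1}^N α*_i = 1. -/
/-!
The bracket `b_k(x) = 1 + M_k (L̄_k - x) / λ` is antitone in `x`, and client `k + 1` contributes
nothing to `M_{k+1} (L̄_{k+1} - L̂_{k+1})`, so that `b_{k+1}(L̂_{k+1}) = b_k(L̂_{k+1})`. Hence
membership of `p` in the set it maximizes makes `b_p` positive at the first `p` losses, while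
failure of the condition at `p + 1` makes `b_p` nonpositive at all later ones. The positive part
thus acts as a cut-off after `p`, and since the weighted deviations from the mean `L̄_p` cancel, the
remaining weights `m_i b_p(L̂_i) / M_p` have the same sum as the `m_i / M_p`.
-/

open Finset

noncomputable section

section Mpart

variable {m L : ℕ → ℝ} {k : ℕ}

theorem mpart_succ (m : ℕ → ℝ) (k : ℕ) : Mpart m (k + 1) = Mpart m k + m k :=
  sum_range_succ m k

theorem mpart_pos (hk : k ≠ 0) (hm : ∀ i < k, 0 < m i) : 0 < Mpart m k :=
  sum_pos (fun i hi ↦ hm i (mem_range.1 hi)) (nonempty_range_iff.2 hk)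

theorem mpart_mul_lbar (hM : Mpart m k ≠ 0) :
    Mpart m k * Lbar m L k = ∑ i ∈ range k, m i * L i :=
  mul_div_cancel₀ _ hM

theorem sum_mul_lbar_sub_eq_zero (hM : Mpart m k ≠ 0) :
    ∑ i ∈ range k, m i * (Lbar m L k - L i) = 0 := by
  simp only [mul_sub, sum_sub_distrib, ← sum_mul]
  exact sub_eq_zero.2 (mpart_mul_lbar hM)

theorem mpart_succ_mul_lbar_succ_sub (hM : Mpart m k ≠ 0) (hM' : Mpart m (k + 1) ≠ 0) :
    Mpart m (k + 1) * (Lbar m L (k + 1) - L k) = Mpart m k * (Lbar m L k - L k) := by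
  rw [mul_sub, mul_sub, mpart_mul_lbar hM', mpart_mul_lbar hM, sum_range_succ, mpart_succ]
  ring

end Mpart

/-- The bracket `1 + M_k·(L̄_k − x)/λ` as a function of the loss value `x`: at `x = L̂_k` it decides
whether `k` competes for `p`, and at `k = p`, `x = L̂_i` its positive part occurs in `α*_i`. -/
def bracket (m L : ℕ → ℝ) (lam : ℝ) (k : ℕ) (x : ℝ) : ℝ :=
  1 + Mpart m k * (Lbar m L k - x) / lam

section Bracket

variable {m L : ℕ → ℝ} {lam : ℝ} {k : ℕ}

theorem bracket_antitone (hlam : 0 ≤ lam) (hM : 0 ≤ Mpart m k) :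
    Antitone (bracket m L lam k) := by
  intro x y hxy
  unfold bracket
  gcongr

theorem bracket_one (m L : ℕ → ℝ) (lam : ℝ) : bracket m L lam 1 (L 0) = 1 := by
  by_cases h : m 0 = 0 <;> simp [bracket, Lbar, Mpart, h]

theorem bracket_succ (hM : Mpart m k ≠ 0) (hM' : Mpart m (k + 1) ≠ 0) :
    bracket m L lam (k + 1) (L k) = bracket m L lam k (L k) := by
  rw [bracket, bracket, mpart_succ_mul_lbar_succ_sub hM hM']

theorem sum_div_mpart_mul_bracket (hM : Mpart m k ≠ 0) :
    ∑ i ∈ range k, m i / Mpart m k * bracket m L lam k (L i) = 1 := by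
  have hterm (i : ℕ) : m i / Mpart m k * bracket m L lam k (L i) =
      m i / Mpart m k + m i * (Lbar m L k - L i) / lam := by
    unfold bracket
    field_simp
  calc ∑ i ∈ range k, m i / Mpart m k * bracket m L lam k (L i)
      = (∑ i ∈ range k, m i) / Mpart m k +
          (∑ i ∈ range k, m i * (Lbar m L k - L i)) / lam := by
        simp only [hterm, sum_add_distrib, sum_div]
    _ = 1 := by rw [sum_mul_lbar_sub_eq_zero hM, zero_div, add_zero, ← Mpart, div_self hM]

end Bracket

section GoodSet

variable {m L : ℕ → ℝ} {lam : ℝ} {N p i : ℕ}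

theorem mem_goodSet_iff {k : ℕ} :
    k ∈ goodSet m L lam N ↔ (1 ≤ k ∧ k ≤ N) ∧ 0 < bracket m L lam k (L (k - 1)) :=
  and_congr_left' mem_Icc

theorem isGreatest_pIdx (hN : 1 ≤ N) : IsGreatest (goodSet m L lam N) (pIdx m L lam N) := by
  have hone : 1 ∈ goodSet m L lam N :=
    mem_goodSet_iff.2 ⟨⟨le_rfl, hN⟩, zero_lt_one.trans_eq (bracket_one m L lam).symm⟩
  have hbdd : BddAbove (goodSet m L lam N) := ⟨N, fun _ hk ↦ (mem_goodSet_iff.1 hk).1.2⟩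
  exact ⟨Nat.sSup_mem ⟨1, hone⟩ hbdd, fun _ hk ↦ le_csSup hbdd hk⟩

theorem mpart_pos_of_mem_goodSet (hm : ∀ i < N, 0 < m i) (hp : p ∈ goodSet m L lam N) :
    0 < Mpart m p :=
  have ⟨hp1, hpN⟩ := (mem_goodSet_iff.1 hp).1
  mpart_pos (Nat.one_le_iff_ne_zero.1 hp1) fun i hi ↦ hm i (hi.trans_le hpN)

theorem bracket_pos_of_mem_goodSet (hm : ∀ i < N, 0 < m i) (hL : MonotoneOn L (Set.Iio N))
    (hlam : 0 ≤ lam) (hp : p ∈ goodSet m L lam N) (hi : i < p) :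
    0 < bracket m L lam p (L i) := by
  obtain ⟨⟨-, hpN⟩, hpos⟩ := mem_goodSet_iff.1 hp
  have hLi : L i ≤ L (p - 1) :=
    hL (hi.trans_le hpN) (Set.mem_Iio.2 (by lia)) (Nat.le_sub_one_of_lt hi)
  exact hpos.trans_le (bracket_antitone hlam (mpart_pos_of_mem_goodSet hm hp).le hLi)

theorem bracket_nonpos_of_isGreatest_goodSet (hm : ∀ i < N, 0 < m i)
    (hL : MonotoneOn L (Set.Iio N)) (hlam : 0 ≤ lam) (hp : IsGreatest (goodSet m L lam N) p)
    (hpi : p ≤ i) (hiN : i < N) : bracket m L lam p (L i) ≤ 0 := by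
  have hpN : p < N := hpi.trans_lt hiN
  have hM : 0 < Mpart m p := mpart_pos_of_mem_goodSet hm hp.1
  have hM' : 0 < Mpart m (p + 1) := mpart_succ m p ▸ add_pos hM (hm p hpN)
  have hnot : p + 1 ∉ goodSet m L lam N := fun h ↦ p.not_succ_le_self (hp.2 h)
  calc bracket m L lam p (L i)
      ≤ bracket m L lam p (L p) := bracket_antitone hlam hM.le (hL hpN hiN hpi)
    _ = bracket m L lam (p + 1) (L p) := (bracket_succ hM.ne' hM'.ne').symm
    _ ≤ 0 := not_lt.1 fun h ↦ hnot (mem_goodSet_iff.2 ⟨⟨Nat.le_add_left 1 p, hpN⟩, h⟩)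

end GoodSet

section AlphaStar

variable {m L : ℕ → ℝ} {lam : ℝ} {N i : ℕ}

theorem alphaStar_eq_zero (h : bracket m L lam (pIdx m L lam N) (L i) ≤ 0) :
    alphaStar m L lam N i = 0 :=
  mul_eq_zero_of_right _ (max_eq_left h)

theorem alphaStar_eq_mul_bracket (h : 0 ≤ bracket m L lam (pIdx m L lam N) (L i)) :
    alphaStar m L lam N i =
      m i / Mpart m (pIdx m L lam N) * bracket m L lam (pIdx m L lam N) (L i) :=
  congrArg _ (max_eq_right h)

end AlphaStar

/-- `α*` is feasible: nonnegative entries, positive for `i ≤ p`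
(0-indexed: `i < p`), zero for `i > p` (0-indexed: `p ≤ i`), and summing to `1`. -/
theorem alphaStar_feasible
    (N : ℕ) (hN : 1 ≤ N) (m L : ℕ → ℝ)
    (hm : ∀ i < N, 0 < m i)
    (hL : ∀ i j, i ≤ j → j < N → L i ≤ L j)
    (lam : ℝ) (hlam : 0 < lam) :
    (∀ i < N, 0 ≤ alphaStar m L lam N i) ∧
    (∀ i < pIdx m L lam N, 0 < alphaStar m L lam N i) ∧
    (∀ i, pIdx m L lam N ≤ i → i < N → alphaStar m L lam N i = 0) ∧
    ∑ i ∈ Finset.range N, alphaStar m L lam N i = 1 := by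
  have hmono : MonotoneOn L (Set.Iio N) := fun i _ j hj hij ↦ hL i j hij hj
  have hp := isGreatest_pIdx (m := m) (L := L) (lam := lam) hN
  have hpN : pIdx m L lam N ≤ N := (mem_goodSet_iff.1 hp.1).1.2
  have hM : 0 < Mpart m (pIdx m L lam N) := mpart_pos_of_mem_goodSet hm hp.1
  have hbr (i : ℕ) (hi : i < pIdx m L lam N) : 0 < bracket m L lam (pIdx m L lam N) (L i) :=
    bracket_pos_of_mem_goodSet hm hmono hlam.le hp.1 hi
  have hpos (i : ℕ) (hi : i < pIdx m L lam N) : 0 < alphaStar m L lam N i := by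
    rw [alphaStar_eq_mul_bracket (hbr i hi).le]
    exact mul_pos (div_pos (hm i (hi.trans_le hpN)) hM) (hbr i hi)
  have hzero (i : ℕ) (hpi : pIdx m L lam N ≤ i) (hiN : i < N) : alphaStar m L lam N i = 0 :=
    alphaStar_eq_zero (bracket_nonpos_of_isGreatest_goodSet hm hmono hlam.le hp hpi hiN)
  refine ⟨fun i hi ↦ ?_, hpos, hzero, ?_⟩
  · exact (lt_or_ge i (pIdx m L lam N)).elim (fun h ↦ (hpos i h).le) fun h ↦ (hzero i h hi).ge
  · rw [← sum_subset (range_mono hpN) fun i hi hip ↦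
        hzero i (not_lt.1 (mt mem_range.2 hip)) (mem_range.1 hi),
      sum_congr rfl fun i hi ↦ alphaStar_eq_mul_bracket (hbr i (mem_range.1 hi)).le]
    exact sum_div_mpart_mul_bracket hM.ne'
end
end
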